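/- arXiv:1112.4294 — 2 statements merged into one kernel-verified Lean document; each statement's English description precedes it below -/
import Mathlib

section
/- Let n ≥ 1, A ∈ ℝ^{n×n} arbitrary, B ∈ ℝ^{n×n} diagonal and invertible, D ∈ ℝ^{n×n} diagonal, and x0, w0 ∈ ℝⁿ. For the closed loop with the deadbeat controller (x_K(0)=0, x_K(k+1)=D x_K(k) − B^{-1}D² x(k), u(k)=x_K(k) − B^{-1}(A+D)x(k), x(0)=x0, w(0)=w0, x(k+1)=Ax(k)+B(u(k)+w(k)), w(k+1)=Dw(k)), the cost Σ_{k=0}^∞ (‖x(k)‖² + ‖u(k)+w(k)‖²) equals [x0; Bw0]ᵀ [[Q11, Q12],[Q12ᵀ, Q22]] [x0; Bw0], where Q11 = I + D²(I + B^{-2}) + AᵀB^{-2}A + DAᵀB^{-2}AD + AᵀB^{-2}D + DB^{-2}A, Q12 = −D − AᵀB^{-2} − DB^{-2} − DAᵀB^{-2}A, and Q22 = AᵀB^{-2}A + B^{-2} + I. -/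
open Matrix
open scoped ENNReal

/-!
Write `v = B w(0)`. Since `B` and `D` commute, the controller cancels the plant dynamics and the
disturbance exactly after one step, leaving `x(1) = v - D x(0)` and `x(k + 2) = 0`; moreover
`u(k) + w(k) = B⁻¹ (x(k + 1) - A x(k))`. Hence only the first two stages contribute to the cost, and
their outputs `(x(k), u(k) + w(k))` are `G₀ z` and `G₁ z` for explicit block matrices `G₀`, `G₁` and
`z = (x(0), v)`. The cost is therefore the quadratic form of `G₀ᵀ G₀ + G₁ᵀ G₁` at `z`.
-/

lemma dotProduct_transpose_mul_self_mulVec {ι κ R : Type*} [Fintype ι] [Fintype κ]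
    [CommSemiring R] (M : Matrix κ ι R) (v : ι → R) :
    v ⬝ᵥ (Mᵀ * M) *ᵥ v = (M *ᵥ v) ⬝ᵥ (M *ᵥ v) := by
  rw [← mulVec_mulVec, dotProduct_transpose_mulVec]

lemma commute_of_isDiag {ι R : Type*} [Fintype ι] [NonUnitalNonAssocCommSemiring R]
    {M N : Matrix ι ι R} (hM : M.IsDiag) (hN : N.IsDiag) : Commute M N := by
  classical
  rw [← hM.diagonal_diag, ← hN.diagonal_diag]
  exact commute_diagonal _ _

section Deadbeat

variable {ι R : Type*} [Fintype ι] [DecidableEq ι] [CommRing R]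

/-- The closed loop of the plant `(A, B)`, whose input disturbance is generated by `D`, with the
deadbeat controller: `x` is the state, `w` the disturbance, `xK` the controller state and `u` the
control. -/
structure IsDeadbeatLoop (A B D : Matrix ι ι R) (x w xK u : ℕ → ι → R) : Prop where
  controller_zero : xK 0 = 0
  controller_succ : ∀ k, xK (k + 1) = D *ᵥ xK k - (B⁻¹ * D ^ 2) *ᵥ x k
  control : ∀ k, u k = xK k - (B⁻¹ * (A + D)) *ᵥ x k
  state_succ : ∀ k, x (k + 1) = A *ᵥ x k + B *ᵥ (u k + w k)
  disturbance_succ : ∀ k, w (k + 1) = D *ᵥ w k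

/-- The matrix sending `(x(0), B w(0))` to the stage output `(x(0), u(0) + w(0))`. -/
noncomputable def outputMatrixZero (A B D : Matrix ι ι R) : Matrix (ι ⊕ ι) (ι ⊕ ι) R :=
  fromBlocks 1 0 (-(B⁻¹ * (A + D))) B⁻¹

/-- The matrix sending `(x(0), B w(0))` to the stage output `(x(1), u(1) + w(1))`. -/
noncomputable def outputMatrixOne (A B D : Matrix ι ι R) : Matrix (ι ⊕ ι) (ι ⊕ ι) R :=
  fromBlocks (-D) 1 (B⁻¹ * A * D) (-(B⁻¹ * A))

/-- The matrix of the deadbeat cost as a quadratic form in `(x(0), B w(0))`: the observability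
Gramian of the closed loop, which has only two terms. -/
noncomputable def deadbeatCostMatrix (A B D : Matrix ι ι R) : Matrix (ι ⊕ ι) (ι ⊕ ι) R :=
  (outputMatrixZero A B D)ᵀ * outputMatrixZero A B D +
    (outputMatrixOne A B D)ᵀ * outputMatrixOne A B D

lemma dotProduct_deadbeatCostMatrix_mulVec (A B D : Matrix ι ι R) (z : ι ⊕ ι → R) :
    z ⬝ᵥ deadbeatCostMatrix A B D *ᵥ z =
      (outputMatrixZero A B D *ᵥ z) ⬝ᵥ (outputMatrixZero A B D *ᵥ z) +
        (outputMatrixOne A B D *ᵥ z) ⬝ᵥ (outputMatrixOne A B D *ᵥ z) := by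
  simp only [deadbeatCostMatrix, add_mulVec, dotProduct_add, dotProduct_transpose_mul_self_mulVec]

lemma deadbeatCostMatrix_eq_fromBlocks (A B D : Matrix ι ι R) :
    deadbeatCostMatrix A B D =
      fromBlocks
        (1 + (B⁻¹ * (A + D))ᵀ * (B⁻¹ * (A + D)) + Dᵀ * D + (B⁻¹ * A * D)ᵀ * (B⁻¹ * A * D))
        (-((B⁻¹ * (A + D))ᵀ * B⁻¹ + Dᵀ + (B⁻¹ * A * D)ᵀ * (B⁻¹ * A)))
        (-((B⁻¹ * (A + D))ᵀ * B⁻¹ + Dᵀ + (B⁻¹ * A * D)ᵀ * (B⁻¹ * A)))ᵀ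
        ((B⁻¹)ᵀ * B⁻¹ + 1 + (B⁻¹ * A)ᵀ * (B⁻¹ * A)) := by
  simp only [deadbeatCostMatrix, outputMatrixZero, outputMatrixOne, fromBlocks_transpose,
    fromBlocks_multiply, fromBlocks_add, fromBlocks_inj]
  simp only [transpose_add, transpose_neg, transpose_mul, transpose_transpose, transpose_zero,
    transpose_one]
  refine ⟨?_, ?_, ?_, ?_⟩ <;> noncomm_ring

lemma deadbeatCostMatrix_of_isSymm {A B D : Matrix ι ι R} (hB : B.IsSymm) (hD : D.IsSymm)
    (hBD : Commute B D) {Q₁₁ Q₁₂ Q₂₂ : Matrix ι ι R}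
    (hQ₁₁ : Q₁₁ = 1 + D ^ 2 * (1 + B⁻¹ ^ 2) + Aᵀ * B⁻¹ ^ 2 * A
      + D * Aᵀ * B⁻¹ ^ 2 * A * D + Aᵀ * B⁻¹ ^ 2 * D + D * B⁻¹ ^ 2 * A)
    (hQ₁₂ : Q₁₂ = -D - Aᵀ * B⁻¹ ^ 2 - D * B⁻¹ ^ 2 - D * Aᵀ * B⁻¹ ^ 2 * A)
    (hQ₂₂ : Q₂₂ = Aᵀ * B⁻¹ ^ 2 * A + B⁻¹ ^ 2 + 1) :
    deadbeatCostMatrix A B D = fromBlocks Q₁₁ Q₁₂ Q₁₂ᵀ Q₂₂ := by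
  have hB' : (B⁻¹)ᵀ = B⁻¹ := hB.inv
  have hDB : B⁻¹ ^ 2 * D = D * B⁻¹ ^ 2 := by
    simpa using ((Matrix.Commute.zpow_left hBD (-1)).pow_left 2).eq
  have h₁₁ : 1 + (B⁻¹ * (A + D))ᵀ * (B⁻¹ * (A + D)) + Dᵀ * D
      + (B⁻¹ * A * D)ᵀ * (B⁻¹ * A * D) = Q₁₁ := by
    calc
      _ = 1 + D ^ 2 + D * (B⁻¹ ^ 2 * D) + Aᵀ * B⁻¹ ^ 2 * A
          + D * Aᵀ * B⁻¹ ^ 2 * A * D + Aᵀ * B⁻¹ ^ 2 * D + D * B⁻¹ ^ 2 * A := by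
        simp only [transpose_mul, transpose_add, hB', hD.eq, pow_two]
        noncomm_ring
      _ = Q₁₁ := by
        rw [hDB, hQ₁₁]
        noncomm_ring
  have h₁₂ : -((B⁻¹ * (A + D))ᵀ * B⁻¹ + Dᵀ + (B⁻¹ * A * D)ᵀ * (B⁻¹ * A)) = Q₁₂ := by
    simp only [hQ₁₂, transpose_mul, transpose_add, hB', hD.eq]
    noncomm_ring
  have h₂₂ : (B⁻¹)ᵀ * B⁻¹ + 1 + (B⁻¹ * A)ᵀ * (B⁻¹ * A) = Q₂₂ := by
    simp only [hQ₂₂, transpose_mul, hB']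
    noncomm_ring
  rw [deadbeatCostMatrix_eq_fromBlocks, h₁₁, h₁₂, h₂₂]

namespace IsDeadbeatLoop

variable {A B D : Matrix ι ι R} {x w xK u : ℕ → ι → R}

lemma state_succ_eq_sub (h : IsDeadbeatLoop A B D x w xK u) (hB : IsUnit B.det) (k : ℕ) :
    x (k + 1) = B *ᵥ (xK k + w k) - D *ᵥ x k := by
  rw [h.state_succ, h.control]
  simp only [mulVec_add, mulVec_sub, mulVec_mulVec, mul_nonsing_inv_cancel_left _ _ hB, add_mulVec]
  abel

lemma state_add_two (h : IsDeadbeatLoop A B D x w xK u) (hB : IsUnit B.det) (hBD : Commute B D)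
    (k : ℕ) : x (k + 2) = 0 := by
  have hctrl : B *ᵥ (xK (k + 1) + w (k + 1)) = D *ᵥ x (k + 1) := by
    calc
      _ = (B * D) *ᵥ (xK k + w k) - (D ^ 2) *ᵥ x k := by
        simp only [h.controller_succ, h.disturbance_succ, mulVec_add, mulVec_sub, mulVec_mulVec,
          mul_nonsing_inv_cancel_left _ _ hB]
        abel
      _ = D *ᵥ x (k + 1) := by
        rw [h.state_succ_eq_sub hB, hBD.eq, pow_two, mulVec_sub, mulVec_mulVec, mulVec_mulVec]
  rw [h.state_succ_eq_sub hB, hctrl, sub_self]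

lemma control_add_disturbance (h : IsDeadbeatLoop A B D x w xK u) (hB : IsUnit B.det) (k : ℕ) :
    u k + w k = B⁻¹ *ᵥ (x (k + 1) - A *ᵥ x k) := by
  rw [h.state_succ, add_sub_cancel_left, mulVec_mulVec, nonsing_inv_mul _ hB, one_mulVec]

lemma state_one (h : IsDeadbeatLoop A B D x w xK u) (hB : IsUnit B.det) :
    x 1 = B *ᵥ w 0 - D *ᵥ x 0 := by
  rw [h.state_succ_eq_sub hB 0, h.controller_zero, zero_add]

lemma output_zero (h : IsDeadbeatLoop A B D x w xK u) (hB : IsUnit B.det) :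
    Sum.elim (x 0) (u 0 + w 0) = outputMatrixZero A B D *ᵥ Sum.elim (x 0) (B *ᵥ w 0) := by
  rw [h.control_add_disturbance hB, zero_add, h.state_one hB, outputMatrixZero, fromBlocks_mulVec]
  simp only [Sum.elim_comp_inl, Sum.elim_comp_inr, one_mulVec, zero_mulVec, add_zero]
  congr 1
  simp only [mulVec_sub, neg_mulVec, ← mulVec_mulVec, add_mulVec, mulVec_add]
  abel

lemma output_one (h : IsDeadbeatLoop A B D x w xK u) (hB : IsUnit B.det) (hBD : Commute B D) :
    Sum.elim (x 1) (u 1 + w 1) = outputMatrixOne A B D *ᵥ Sum.elim (x 0) (B *ᵥ w 0) := by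
  rw [h.control_add_disturbance hB, h.state_add_two hB hBD 0, h.state_one hB, outputMatrixOne,
    fromBlocks_mulVec]
  simp only [Sum.elim_comp_inl, Sum.elim_comp_inr, one_mulVec]
  congr 1
  · rw [neg_mulVec, neg_add_eq_sub]
  · simp only [zero_sub, mulVec_neg, mulVec_sub, neg_mulVec, ← mulVec_mulVec]
    abel

lemma output_add_two (h : IsDeadbeatLoop A B D x w xK u) (hB : IsUnit B.det) (hBD : Commute B D)
    (k : ℕ) : Sum.elim (x (k + 2)) (u (k + 2) + w (k + 2)) = 0 := by
  rw [h.control_add_disturbance hB, h.state_add_two hB hBD, h.state_add_two hB hBD (k + 1)]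
  simp

theorem hasSum_cost [TopologicalSpace R] (h : IsDeadbeatLoop A B D x w xK u)
    (hB : IsUnit B.det) (hBD : Commute B D) :
    HasSum (fun k ↦ ∑ i, x k i ^ 2 + ∑ i, (u k i + w k i) ^ 2)
      (Sum.elim (x 0) (B *ᵥ w 0) ⬝ᵥ
        deadbeatCostMatrix A B D *ᵥ Sum.elim (x 0) (B *ᵥ w 0)) := by
  have hcost (k : ℕ) : ∑ i, x k i ^ 2 + ∑ i, (u k i + w k i) ^ 2 =
      Sum.elim (x k) (u k + w k) ⬝ᵥ Sum.elim (x k) (u k + w k) := by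
    simp [dotProduct, pow_two]
  simp only [hcost]
  rw [dotProduct_deadbeatCostMatrix_mulVec, ← h.output_zero hB, ← h.output_one hB hBD,
    ← Finset.sum_range_one (fun k ↦ Sum.elim (x k) (u k + w k) ⬝ᵥ Sum.elim (x k) (u k + w k)),
    ← Finset.sum_range_succ]
  refine hasSum_sum_of_ne_finset_zero fun k hk ↦ ?_
  obtain ⟨j, rfl⟩ := Nat.exists_eq_add_of_le' (not_lt.mp (Finset.mem_range.not.mp hk))
  rw [h.output_add_two hB hBD, zero_dotProduct]

end IsDeadbeatLoop

theorem deadbeat_cost_formula_general {A B D : Matrix ι ι ℝ} {x w xK u : ℕ → ι → ℝ}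
    (h : IsDeadbeatLoop A B D x w xK u) (hB : IsUnit B.det) (hBD : Commute B D) :
    ∑' k, ENNReal.ofReal (∑ i, x k i ^ 2 + ∑ i, (u k i + w k i) ^ 2) =
      ENNReal.ofReal (Sum.elim (x 0) (B *ᵥ w 0) ⬝ᵥ
        deadbeatCostMatrix A B D *ᵥ Sum.elim (x 0) (B *ᵥ w 0)) := by
  have hsum := h.hasSum_cost hB hBD
  rw [← hsum.tsum_eq]
  exact (ENNReal.ofReal_tsum_of_nonneg (fun _ ↦ by positivity) hsum.summable).symm

end Deadbeat

/-- **Cost of the deadbeat controller (Definition 3).** For the closed loop with the deadbeat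
controller, the cost `Σ_{k=0}^∞ (‖x(k)‖² + ‖u(k)+w(k)‖²)` equals
`[x0; Bw0]ᵀ [[Q11, Q12],[Q12ᵀ, Q22]] [x0; Bw0]` with `Q11, Q12, Q22` as in (16)–(18). -/
theorem deadbeat_cost_formula (n : ℕ) (hn : 1 ≤ n)
    (A B D : Matrix (Fin n) (Fin n) ℝ)
    (hBdiag : B.IsDiag) (hBinv : IsUnit B.det) (hDdiag : D.IsDiag)
    (x0 w0 : Fin n → ℝ)
    (x w xK u : ℕ → Fin n → ℝ)
    (hx0 : x 0 = x0) (hw0 : w 0 = w0) (hxK0 : xK 0 = 0)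
    (hxK : ∀ k, xK (k + 1) = D.mulVec (xK k) - (B⁻¹ * D ^ 2).mulVec (x k))
    (hu : ∀ k, u k = xK k - (B⁻¹ * (A + D)).mulVec (x k))
    (hx : ∀ k, x (k + 1) = A.mulVec (x k) + B.mulVec (u k + w k))
    (hw : ∀ k, w (k + 1) = D.mulVec (w k))
    (Q11 Q12 Q22 : Matrix (Fin n) (Fin n) ℝ)
    (hQ11 : Q11 = 1 + D ^ 2 * (1 + B⁻¹ ^ 2) + Aᵀ * B⁻¹ ^ 2 * A
        + D * Aᵀ * B⁻¹ ^ 2 * A * D + Aᵀ * B⁻¹ ^ 2 * D + D * B⁻¹ ^ 2 * A)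
    (hQ12 : Q12 = -D - Aᵀ * B⁻¹ ^ 2 - D * B⁻¹ ^ 2 - D * Aᵀ * B⁻¹ ^ 2 * A)
    (hQ22 : Q22 = Aᵀ * B⁻¹ ^ 2 * A + B⁻¹ ^ 2 + 1) :
    (∑' k : ℕ, ENNReal.ofReal ((∑ i, (x k i) ^ 2) + ∑ i, (u k i + w k i) ^ 2))
      = ENNReal.ofReal
          ((Sum.elim x0 (B.mulVec w0)) ⬝ᵥ
            ((Matrix.fromBlocks Q11 Q12 Q12ᵀ Q22).mulVec (Sum.elim x0 (B.mulVec w0)))) := by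
  have hBD := commute_of_isDiag hBdiag hDdiag
  rw [← hx0, ← hw0, ← deadbeatCostMatrix_of_isSymm hBdiag.isSymm hDdiag.isSymm hBD hQ11 hQ12 hQ22]
  exact deadbeat_cost_formula_general ⟨hxK0, hxK, hu, hx, hw⟩ hBinv hBD
end

section
/- Let n ≥ 2, ε_b > 0, and let S_P, S_K ∈ {0,1}^{n×n} be adjacency matrices such that the plant graph G_P has no isolated node, contains at least one sink (sinks being exactly the nodes n−c+1,…,n for some c ≥ 1), and S_K ⊇ S_P entrywise with ones on the diagonal. Then the control design strategy Γ^Θ is undominated in the set 𝒞 of limited-model-information control design strategies with totally disconnected design graph: there is no Γ ∈ 𝒞 with J_P(Γ(A,B,D)) ≤ J_P(Γ^Θ(A,B,D)) for every admissible plant P = (A,B,D,x0,w0) and strict inequality for at least one such plant. -/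
open Matrix
open scoped ENNReal

/-- State trajectory of the plant `x(k+1) = A x(k) + B (u(k) + w(k))`, `w(k) = D^k w0`. -/
noncomputable def xTraj {n : ℕ} (A B D : Matrix (Fin n) (Fin n) ℝ)
    (x0 w0 : Fin n → ℝ) (u : ℕ → Fin n → ℝ) : ℕ → (Fin n → ℝ)
  | 0 => x0
  | k + 1 => A.mulVec (xTraj A B D x0 w0 u k) + B.mulVec (u k + (D ^ k).mulVec w0)

/-- Cost of a control sequence. -/
noncomputable def cost {n : ℕ} (A B D : Matrix (Fin n) (Fin n) ℝ)
    (x0 w0 : Fin n → ℝ) (u : ℕ → Fin n → ℝ) : ℝ≥0∞ :=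
  ∑' k : ℕ, ENNReal.ofReal ((∑ i, (xTraj A B D x0 w0 u k i) ^ 2)
    + ∑ i, (u k i + (D ^ k).mulVec w0 i) ^ 2)

/-- A dynamic state-feedback controller. -/
structure Ctrl (n : ℕ) : Type 1 where
  σ : Type
  fin : Fintype σ
  dec : DecidableEq σ
  AK : Matrix σ σ ℝ
  BK : Matrix σ (Fin n) ℝ
  CK : Matrix (Fin n) σ ℝ
  DK : Matrix (Fin n) (Fin n) ℝ

/-- Closed-loop state `(x(k), x_K(k))`. -/
noncomputable def clState {n : ℕ} (K : Ctrl n) (A B D : Matrix (Fin n) (Fin n) ℝ)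
    (x0 w0 : Fin n → ℝ) : ℕ → (Fin n → ℝ) × (K.σ → ℝ)
  | 0 => (x0, 0)
  | k + 1 =>
      letI := K.fin
      (A.mulVec (clState K A B D x0 w0 k).1
          + B.mulVec ((K.CK.mulVec (clState K A B D x0 w0 k).2
              + K.DK.mulVec (clState K A B D x0 w0 k).1) + (D ^ k).mulVec w0),
       K.AK.mulVec (clState K A B D x0 w0 k).2 + K.BK.mulVec (clState K A B D x0 w0 k).1)

/-- Control sequence generated by the controller in closed loop. -/
noncomputable def ctrlU {n : ℕ} (K : Ctrl n) (A B D : Matrix (Fin n) (Fin n) ℝ)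
    (x0 w0 : Fin n → ℝ) (k : ℕ) : Fin n → ℝ :=
  letI := K.fin
  K.CK.mulVec (clState K A B D x0 w0 k).2 + K.DK.mulVec (clState K A B D x0 w0 k).1

/-- Closed-loop cost `J_P(K)`. -/
noncomputable def Jcost {n : ℕ} (K : Ctrl n) (A B D : Matrix (Fin n) (Fin n) ℝ)
    (x0 w0 : Fin n → ℝ) : ℝ≥0∞ :=
  cost A B D x0 w0 (ctrlU K A B D x0 w0)

/-- Membership in the structured controller class `𝒦(S_K)`. -/
def memK {n : ℕ} (SK : Fin n → Fin n → Bool) (K : Ctrl n) : Prop :=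
  letI := K.fin
  letI := K.dec
  ∀ i j, SK i j = false → K.DK i j = 0 ∧ ∀ t : ℕ, (K.CK * K.AK ^ t * K.BK) i j = 0

/-- A subcontroller (one block of a limited model information controller). -/
structure SubCtrl (n : ℕ) : Type 1 where
  σ : Type
  fin : Fintype σ
  dec : DecidableEq σ
  AK : Matrix σ σ ℝ
  BK : Matrix σ (Fin n) ℝ
  CK : σ → ℝ
  DK : Fin n → ℝ

/-- Assembling `n` subcontrollers into one controller with block-diagonal `A_K` and `C_K`. -/
noncomputable def assemble {n : ℕ} (γ : Fin n → SubCtrl n) : Ctrl n where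
  σ := Σ i : Fin n, (γ i).σ
  fin := letI : ∀ i, Fintype (γ i).σ := fun i => (γ i).fin; inferInstance
  dec := letI : ∀ i, DecidableEq (γ i).σ := fun i => (γ i).dec; inferInstance
  AK := Matrix.blockDiagonal' (fun i => (γ i).AK)
  BK := fun p j => (γ p.1).BK p.2 j
  CK := fun i q => if q.1 = i then (γ q.1).CK q.2 else 0
  DK := fun i j => (γ i).DK j

/-- A limited model information control design strategy with totally disconnected design
graph: subcontroller `i` is a function of the `i`-th row of `A`, `b_ii` and `d_ii` only. -/
def Strat (n : ℕ) : Type 1 := Fin n → (Fin n → ℝ) → ℝ → ℝ → SubCtrl n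

/-- The controller a strategy produces for the plant `(A, B, D)`. -/
noncomputable def applyStrat {n : ℕ} (Γ : Strat n) (A B D : Matrix (Fin n) (Fin n) ℝ) :
    Ctrl n :=
  assemble (fun i => Γ i (A i) (B i i) (D i i))

/-- Admissible plant data: `A ∈ 𝒜(S_P)`, `B` diagonal with `|b_ii| ≥ ε_b`, `D` diagonal. -/
def Adm {n : ℕ} (SP : Fin n → Fin n → Bool) (εb : ℝ)
    (A B D : Matrix (Fin n) (Fin n) ℝ) : Prop :=
  (∀ i j, SP i j = false → A i j = 0) ∧ B.IsDiag ∧ (∀ i, εb ≤ |B i i|) ∧ D.IsDiag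

/-- The deadbeat subcontroller for subsystem `i`. -/
noncomputable def dbSub {n : ℕ} (i : Fin n) (Ai : Fin n → ℝ) (bii dii : ℝ) : SubCtrl n where
  σ := Fin 1
  fin := inferInstance
  dec := inferInstance
  AK := fun _ _ => dii
  BK := fun _ j => -(bii⁻¹ * dii ^ 2) * (if j = i then 1 else 0)
  CK := fun _ => 1
  DK := fun j => -bii⁻¹ * (Ai j + (if j = i then dii else 0))

/-- The deadbeat control design strategy `Γ^Δ`. -/
noncomputable def dbStrat (n : ℕ) : Strat n := fun i Ai bii dii => dbSub i Ai bii dii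

/-- The control design strategy `Γ^Θ` of (26): deadbeat on every non-sink node and, on each
sink node `i` (the last `c` nodes), the optimal scalar gain
`f_i = 2/(b_ii² + a_ii² + 1 + √((a_ii² + b_ii²)² + 2(b_ii² − a_ii²) + 1))`. -/
noncomputable def thetaStrat (n c : ℕ) : Strat n := fun i Ai bii dii =>
  { σ := Fin 1
    fin := inferInstance
    dec := inferInstance
    AK := fun _ _ => dii
    BK := fun _ j => bii⁻¹ * dii * (if n - c ≤ (i : ℕ) then
        2 / (bii ^ 2 + (Ai i) ^ 2 + 1 +
          Real.sqrt (((Ai i) ^ 2 + bii ^ 2) ^ 2 + 2 * (bii ^ 2 - (Ai i) ^ 2) + 1)) else 0)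
        * Ai j - bii⁻¹ * dii ^ 2 * (if j = i then 1 else 0)
    CK := fun _ => 1
    DK := fun j => bii⁻¹ * ((if n - c ≤ (i : ℕ) then
        2 / (bii ^ 2 + (Ai i) ^ 2 + 1 +
          Real.sqrt (((Ai i) ^ 2 + bii ^ 2) ^ 2 + 2 * (bii ^ 2 - (Ai i) ^ 2) + 1)) else 0) - 1)
        * Ai j - bii⁻¹ * dii * (if j = i then 1 else 0) }

/-!
Let `Γ` do at least as well as `Γ^Θ` on every plant. A non-sink node `i` has a link into some
node `l`. Since subcontroller `i` sees neither the strength `r` of that link nor the input gain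
`β` of `l`, first `r` and then `β` can be sent to infinity: a deviation of `Γ` from `Γ^Θ` at node
`i` leaves `i` off the origin, which costs node `l` an excess of order `r² / β²` over `Γ^Θ`. Hence
`Γ` coincides with `Γ^Θ` at the non-sinks, and these are at rest after the first step if
`B w(0) = D x(0)`, and after the second step in general.

A sink then faces a scalar linear-quadratic problem with optimal cost-to-go `x² + q z²`, where
`z = (A x)_i` and `q` comes from the scalar Riccati equation solved by `f_i`. If
`B w(0) = D x(0)`, the strategy `Γ^Θ` achieves this optimum, so `Γ` must take the same first step.
Since `u(0) = D_K x(0)` does not depend on `w(0)`, the first steps agree for every disturbance.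
From time `1` on `Γ^Θ` is optimal, so `Γ` cannot do better.
-/

section SumsAndLimits

open Filter Topology

lemma le_tsum_of_le_add_succ {s W : ℕ → ℝ≥0∞} (hstep : ∀ k, W k ≤ s k + W (k + 1))
    (hlim : ∑' k, s k ≠ ⊤ → Tendsto W atTop (𝓝 0)) : W 0 ≤ ∑' k, s k := by
  by_cases htop : ∑' k, s k = ⊤
  · exact htop ▸ le_top
  have hpartial : ∀ N, W 0 ≤ ∑ k ∈ Finset.range N, s k + W N := by
    intro N
    induction N with
    | zero => simp
    | succ N ih =>
      rw [Finset.sum_range_succ, add_assoc]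
      exact ih.trans (by gcongr; exact hstep N)
  simpa using ge_of_tendsto' ((ENNReal.tendsto_nat_tsum s).add (hlim htop)) hpartial

lemma tsum_le_of_add_succ_le {s W : ℕ → ℝ≥0∞} (hstep : ∀ k, s k + W (k + 1) ≤ W k) :
    ∑' k, s k ≤ W 0 := by
  have hpartial : ∀ N, ∑ k ∈ Finset.range N, s k + W N ≤ W 0 := by
    intro N
    induction N with
    | zero => simp
    | succ N ih =>
      rw [Finset.sum_range_succ, add_assoc]
      exact le_trans (by gcongr; exact hstep N) ih
  exact ENNReal.tsum_le_of_sum_range_le fun N => le_self_add.trans (hpartial N)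

lemma le_of_sum_le_sum_of_forall_le {ι : Type*} [Fintype ι] {f g : ι → ℝ≥0∞}
    (hgf : ∀ j, g j ≤ f j) (hg : ∀ j, g j ≠ ⊤) (hsum : ∑ j, f j ≤ ∑ j, g j) (i : ι) :
    f i ≤ g i := by
  classical
  refine ENNReal.le_of_add_le_add_right (a := ∑ j ∈ Finset.univ.erase i, g j)
    (ENNReal.sum_ne_top.2 fun j _ => hg j) ?_
  calc f i + ∑ j ∈ Finset.univ.erase i, g j ≤ f i + ∑ j ∈ Finset.univ.erase i, f j := by
        gcongr with j; exact hgf j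
    _ ≤ g i + ∑ j ∈ Finset.univ.erase i, g j := by
        rwa [Finset.add_sum_erase _ f (Finset.mem_univ i),
          Finset.add_sum_erase _ g (Finset.mem_univ i)]

lemma le_of_eventually_sq_mul_le {p q C : ℝ}
    (h : ∀ᶠ r : ℝ in atTop, r ^ 2 * p ≤ C + r ^ 2 * q) : p ≤ q := by
  by_contra! hqp
  have hgrow : Tendsto (fun r : ℝ => r ^ 2 * (p - q)) atTop atTop :=
    (tendsto_pow_atTop two_ne_zero).atTop_mul_const (sub_pos.2 hqp)
  obtain ⟨r, hr, hCr⟩ := (h.and (hgrow.eventually_gt_atTop C)).exists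
  linarith

end SumsAndLimits

/-- Cost `∑ₖ (x(k)² + v(k)²)` of a single node with state `x` and total input `v = u + w`. -/
noncomputable def nodeCost (x v : ℕ → ℝ) : ℝ≥0∞ :=
  ∑' k, ENNReal.ofReal (x k ^ 2 + v k ^ 2)

lemma nodeCost_eq_add_tail (x v : ℕ → ℝ) :
    nodeCost x v = ENNReal.ofReal (x 0 ^ 2 + v 0 ^ 2)
      + nodeCost (fun k => x (k + 1)) fun k => v (k + 1) :=
  tsum_eq_zero_add' ENNReal.summable

section ScalarRegulator

open Filter Topology

variable {a b f q : ℝ} {x v z : ℕ → ℝ}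

-- With `p = 1 + a²q` and `p f = q`, minimising over `v` leaves `q z²`, attained at `v = -b q z`.
lemma sq_add_weighted_sq_eq (hf : f + b ^ 2 * q = 1) (hric : (1 + a ^ 2 * q) * f = q)
    (z v : ℝ) :
    v ^ 2 + (1 + a ^ 2 * q) * (z + b * v) ^ 2
      = q * z ^ 2 + (1 + b ^ 2 * (1 + a ^ 2 * q)) * (v + b * q * z) ^ 2 := by
  have hp : q * (1 + b ^ 2 * (1 + a ^ 2 * q)) = 1 + a ^ 2 * q := by
    linear_combination (1 + a ^ 2 * q) * hf - hric
  linear_combination -(2 * b * z * v + z ^ 2 + b ^ 2 * q * z ^ 2) * hp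

lemma le_nodeCost_of_riccati (hq : 0 ≤ q) (hf : f + b ^ 2 * q = 1)
    (hric : (1 + a ^ 2 * q) * f = q) (hx : ∀ k, x (k + 1) = z k + b * v k)
    (hz : ∀ k, z (k + 1) = a * x (k + 1)) :
    ENNReal.ofReal (x 0 ^ 2 + v 0 ^ 2 + (1 + a ^ 2 * q) * x 1 ^ 2) ≤ nodeCost x v := by
  have hp : 0 ≤ 1 + a ^ 2 * q := by positivity
  refine le_tsum_of_le_add_succ
    (W := fun k => ENNReal.ofReal (x k ^ 2 + v k ^ 2 + (1 + a ^ 2 * q) * x (k + 1) ^ 2))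
    (fun k => ?_) fun hfin => ?_
  · rw [← ENNReal.ofReal_add (by positivity) (by positivity)]
    apply ENNReal.ofReal_le_ofReal
    have hsq := sq_add_weighted_sq_eq hf hric (z (k + 1)) (v (k + 1))
    rw [← hx (k + 1), hz k] at hsq
    have : 0 ≤ (1 + b ^ 2 * (1 + a ^ 2 * q)) * (v (k + 1) + b * q * (a * x (k + 1))) ^ 2 := by
      positivity
    linarith
  · have hs := ENNReal.tendsto_atTop_zero_of_tsum_ne_top hfin
    have hbound : Tendsto (fun k => ENNReal.ofReal (x k ^ 2 + v k ^ 2)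
        + ENNReal.ofReal (1 + a ^ 2 * q) * ENNReal.ofReal (x (k + 1) ^ 2 + v (k + 1) ^ 2))
        atTop (𝓝 0) := by
      simpa using hs.add (ENNReal.Tendsto.const_mul ((tendsto_add_atTop_iff_nat 1).2 hs)
        (Or.inr ENNReal.ofReal_ne_top))
    refine tendsto_of_tendsto_of_tendsto_of_le_of_le tendsto_const_nhds hbound
      (fun _ => zero_le) fun k => ?_
    beta_reduce
    rw [← ENNReal.ofReal_mul hp, ← ENNReal.ofReal_add (by positivity) (by positivity)]
    gcongr
    exact le_add_of_nonneg_right (sq_nonneg _)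

lemma nodeCost_le_of_riccati_le (hb : b ≠ 0) (hq : 0 ≤ q) (hf0 : 0 ≤ f)
    (hf : f + b ^ 2 * q = 1) (hric : (1 + a ^ 2 * q) * f ≤ q)
    (hx : ∀ k, x (k + 1) = z k + b * v k) (hz : ∀ k, z (k + 1) = a * x (k + 1))
    (hfeedback : ∀ k, x (k + 1) = f * z k) :
    nodeCost x v ≤ ENNReal.ofReal (x 0 ^ 2 + q * z 0 ^ 2) := by
  refine tsum_le_of_add_succ_le (W := fun k => ENNReal.ofReal (x k ^ 2 + q * z k ^ 2))
    fun k => ?_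
  have hv : v k = -(b * q * z k) := by
    apply mul_left_cancel₀ hb
    linear_combination hfeedback k - hx k + z k * hf
  rw [← ENNReal.ofReal_add (by positivity) (by positivity)]
  apply ENNReal.ofReal_le_ofReal
  calc x k ^ 2 + v k ^ 2 + (x (k + 1) ^ 2 + q * z (k + 1) ^ 2)
      = x k ^ 2 + (b ^ 2 * q * q + f * ((1 + a ^ 2 * q) * f)) * z k ^ 2 := by
        rw [hz, hfeedback, hv]; ring
    _ ≤ x k ^ 2 + (b ^ 2 * q * q + f * q) * z k ^ 2 := by gcongr
    _ = x k ^ 2 + q * z k ^ 2 := by linear_combination q * z k ^ 2 * hf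

end ScalarRegulator

lemma sq_div_one_add_sq_le (r b v : ℝ) : r ^ 2 / (1 + b ^ 2) ≤ (r + b * v) ^ 2 + v ^ 2 := by
  rw [div_le_iff₀ (by positivity)]
  linarith [sq_nonneg (v * (1 + b ^ 2) + b * r)]

lemma tsum_sq_div_le_nodeCost {b : ℝ} {x v z : ℕ → ℝ} (hx : ∀ k, x (k + 1) = z k + b * v k) :
    ∑' k, ENNReal.ofReal (z k ^ 2 / (1 + b ^ 2)) ≤ nodeCost x v := by
  calc ∑' k, ENNReal.ofReal (z k ^ 2 / (1 + b ^ 2))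
      ≤ ∑' k, (ENNReal.ofReal (x (k + 1) ^ 2) + ENNReal.ofReal (v k ^ 2)) := by
        refine ENNReal.tsum_le_tsum fun k => ?_
        rw [← ENNReal.ofReal_add (by positivity) (by positivity), hx]
        exact ENNReal.ofReal_le_ofReal (sq_div_one_add_sq_le _ _ _)
    _ ≤ ∑' k, ENNReal.ofReal (x k ^ 2) + ∑' k, ENNReal.ofReal (v k ^ 2) := by
        rw [ENNReal.tsum_add]
        exact add_le_add (ENNReal.tsum_comp_le_tsum_of_injective (add_left_injective 1)
          fun k => ENNReal.ofReal (x k ^ 2)) le_rfl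
    _ = nodeCost x v := by
        rw [← ENNReal.tsum_add]
        exact tsum_congr fun k => (ENNReal.ofReal_add (by positivity) (by positivity)).symm

section Gain

/-- The gain `f_i` of `Γ^Θ` at a sink with self-coupling `a = a_ii` and input gain `b = b_ii`. -/
noncomputable def sinkGain (a b : ℝ) : ℝ :=
  2 / (b ^ 2 + a ^ 2 + 1 + Real.sqrt ((a ^ 2 + b ^ 2) ^ 2 + 2 * (b ^ 2 - a ^ 2) + 1))

lemma sinkGain_nonneg (a b : ℝ) : 0 ≤ sinkGain a b := by
  rw [sinkGain]; positivity

lemma sinkGain_le_one (a b : ℝ) : sinkGain a b ≤ 1 := by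
  have hsqrt : 1 - a ^ 2 - b ^ 2
      ≤ Real.sqrt ((a ^ 2 + b ^ 2) ^ 2 + 2 * (b ^ 2 - a ^ 2) + 1) :=
    Real.le_sqrt_of_sq_le (by nlinarith [sq_nonneg b])
  rw [sinkGain, div_le_one (by positivity)]
  linarith

lemma sinkGain_quadratic (a b : ℝ) :
    a ^ 2 * sinkGain a b ^ 2 + 1 = (a ^ 2 + b ^ 2 + 1) * sinkGain a b := by
  have hsq : Real.sqrt ((a ^ 2 + b ^ 2) ^ 2 + 2 * (b ^ 2 - a ^ 2) + 1) ^ 2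
      = (a ^ 2 + b ^ 2) ^ 2 + 2 * (b ^ 2 - a ^ 2) + 1 :=
    Real.sq_sqrt (by nlinarith [sq_nonneg (a ^ 2 + b ^ 2 - 1), sq_nonneg b])
  rw [sinkGain]
  field_simp
  linear_combination hsq

variable {n : ℕ} (c : ℕ) (i : Fin n) (a b : ℝ)

/-- The `i`-th diagonal entry of the gain `F(A, B)`. -/
noncomputable def thetaGain : ℝ := if n - c ≤ (i : ℕ) then sinkGain a b else 0

/-- The weight `q` in the cost-to-go `x² + q z²` of a node under `Γ^Θ`, where `z` is the state
the node would move to with zero total input. It satisfies `f + b²q = 1` at every node, and the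
Riccati equation `(1 + a²q) f = q` at the sinks. -/
noncomputable def thetaWeight : ℝ := (1 - thetaGain c i a b) / b ^ 2

lemma thetaGain_nonneg : 0 ≤ thetaGain c i a b := by
  rw [thetaGain]; split_ifs <;> simp [sinkGain_nonneg]

lemma thetaGain_le_one : thetaGain c i a b ≤ 1 := by
  rw [thetaGain]; split_ifs <;> simp [sinkGain_le_one]

lemma thetaWeight_nonneg : 0 ≤ thetaWeight c i a b :=
  div_nonneg (sub_nonneg.2 (thetaGain_le_one c i a b)) (sq_nonneg b)

lemma thetaWeight_le : thetaWeight c i a b ≤ 1 / b ^ 2 := by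
  rw [thetaWeight]
  gcongr
  linarith [thetaGain_nonneg c i a b]

variable {c i a b}

lemma thetaGain_of_lt (hi : (i : ℕ) < n - c) : thetaGain c i a b = 0 :=
  if_neg hi.not_ge

lemma thetaGain_add_sq_mul_thetaWeight (hb : b ≠ 0) :
    thetaGain c i a b + b ^ 2 * thetaWeight c i a b = 1 := by
  rw [thetaWeight]; field_simp; ring

lemma thetaWeight_riccati (hi : n - c ≤ (i : ℕ)) (hb : b ≠ 0) :
    (1 + a ^ 2 * thetaWeight c i a b) * thetaGain c i a b = thetaWeight c i a b := by
  rw [thetaWeight, thetaGain, if_pos hi]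
  field_simp
  linear_combination -sinkGain_quadratic a b

lemma thetaWeight_riccati_le (hb : b ≠ 0) :
    (1 + a ^ 2 * thetaWeight c i a b) * thetaGain c i a b ≤ thetaWeight c i a b := by
  rcases lt_or_ge (i : ℕ) (n - c) with hi | hi
  · rw [thetaGain_of_lt hi, mul_zero]
    exact thetaWeight_nonneg c i a b
  · exact (thetaWeight_riccati hi hb).le

end Gain

namespace SubCtrl

variable {n : ℕ} (γ : SubCtrl n) (x y : ℕ → Fin n → ℝ)

/-- State of the subcontroller `γ` driven by the measured signal `x`, starting from rest. -/
noncomputable def state : ℕ → γ.σ → ℝ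
  | 0 => 0
  | k + 1 => letI := γ.fin; γ.AK *ᵥ state k + γ.BK *ᵥ x k

/-- Input-output map of the subcontroller `γ`: the control it applies in response to `x`. -/
noncomputable def output (k : ℕ) : ℝ :=
  letI := γ.fin; γ.CK ⬝ᵥ γ.state x k + γ.DK ⬝ᵥ x k

lemma state_sub (k : ℕ) : γ.state (x - y) k = γ.state x k - γ.state y k := by
  let _ := γ.fin
  induction k with
  | zero => simp [state]
  | succ k ih =>
    simp only [state, ih, Pi.sub_apply, mulVec_sub]
    abel

lemma output_sub (k : ℕ) : γ.output (x - y) k = γ.output x k - γ.output y k := by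
  let _ := γ.fin
  simp only [output, state_sub, Pi.sub_apply, dotProduct_sub]
  ring

lemma output_zero : γ.output x 0 = γ.DK ⬝ᵥ x 0 := by
  simp [output, state]

variable {x y}

lemma state_succ_of_zero (h0 : x 0 = 0) (k : ℕ) :
    γ.state x (k + 1) = γ.state (fun t => x (t + 1)) k := by
  let _ := γ.fin
  induction k with
  | zero => simp [state, h0]
  | succ k ih => rw [state, ih]; rfl

lemma output_succ_of_zero (h0 : x 0 = 0) (k : ℕ) :
    γ.output x (k + 1) = γ.output (fun t => x (t + 1)) k := by
  simp only [output, γ.state_succ_of_zero h0]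

-- By linearity the signal may be assumed to vanish at time `0`; by time invariance the two
-- outputs at time `k` are then outputs at time `k - 1`, where `γ` and `η` agree.
lemma output_sub_output_eq {γ η : SubCtrl n} {k : ℕ}
    (h : ∀ t < k, ∀ x, γ.output x t = η.output x t) (h0 : x 0 = y 0) :
    γ.output x k - η.output x k = γ.output y k - η.output y k := by
  have hz : (x - y) 0 = 0 := sub_eq_zero.2 h0
  have hdiff : γ.output (x - y) k = η.output (x - y) k := by
    cases k with
    | zero => simp [output_zero, hz]
    | succ k => rw [output_succ_of_zero _ hz, output_succ_of_zero _ hz, h k k.lt_succ_self]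
  rw [output_sub, output_sub] at hdiff
  linarith

end SubCtrl

section Theta

variable {n c : ℕ} {i : Fin n} {a : Fin n → ℝ} {b d w : ℝ} {x : ℕ → Fin n → ℝ}

lemma thetaStrat_state_succ (k : ℕ) :
    (thetaStrat n c i a b d).state x (k + 1) (0 : Fin 1)
      = d * (thetaStrat n c i a b d).state x k (0 : Fin 1)
        + b⁻¹ * d * thetaGain c i (a i) b * (a ⬝ᵥ x k) - b⁻¹ * d ^ 2 * x k i := by
  have hBK : (fun j => b⁻¹ * d * thetaGain c i (a i) b * a j
      - b⁻¹ * d ^ 2 * (if j = i then 1 else 0)) ⬝ᵥ x k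
      = b⁻¹ * d * thetaGain c i (a i) b * (a ⬝ᵥ x k) - b⁻¹ * d ^ 2 * x k i := by
    simp [dotProduct, sub_mul, Finset.sum_sub_distrib, mul_assoc, Finset.mul_sum]
  rw [add_sub_assoc, ← hBK]
  change ∑ _s : Fin 1, d * _ + _ = _
  rw [Fin.sum_univ_one]
  rfl

lemma thetaStrat_output (k : ℕ) :
    (thetaStrat n c i a b d).output x k
      = (thetaStrat n c i a b d).state x k (0 : Fin 1)
        + b⁻¹ * (thetaGain c i (a i) b - 1) * (a ⬝ᵥ x k) - b⁻¹ * d * x k i := by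
  have hDK : (fun j => b⁻¹ * (thetaGain c i (a i) b - 1) * a j
      - b⁻¹ * d * (if j = i then 1 else 0)) ⬝ᵥ x k
      = b⁻¹ * (thetaGain c i (a i) b - 1) * (a ⬝ᵥ x k) - b⁻¹ * d * x k i := by
    simp [dotProduct, sub_mul, Finset.sum_sub_distrib, mul_assoc, Finset.mul_sum]
  rw [add_sub_assoc, ← hDK]
  change ∑ _s : Fin 1, 1 * _ + _ = _
  rw [Fin.sum_univ_one, one_mul]
  rfl

-- The controller state satisfies `b s(k) = d x(k) - b dᵏ w` for `k ≥ 1`: it cancels the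
-- disturbance exactly after one step.
lemma thetaStrat_closed_loop (hb : b ≠ 0) {k : ℕ}
    (hx : ∀ t < k, x (t + 1) i
      = a ⬝ᵥ x t + b * ((thetaStrat n c i a b d).output x t + d ^ t * w)) :
    a ⬝ᵥ x k + b * ((thetaStrat n c i a b d).output x k + d ^ k * w)
      = thetaGain c i (a i) b * (a ⬝ᵥ x k) + if k = 0 then b * w - d * x 0 i else 0 := by
  have hbb : b * b⁻¹ = 1 := mul_inv_cancel₀ hb
  have hstep : ∀ t, a ⬝ᵥ x t + b * ((thetaStrat n c i a b d).output x t + d ^ t * w)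
      = thetaGain c i (a i) b * (a ⬝ᵥ x t)
        + (b * (thetaStrat n c i a b d).state x t (0 : Fin 1) + b * (d ^ t * w)
          - d * x t i) := by
    intro t
    rw [thetaStrat_output]
    linear_combination ((thetaGain c i (a i) b - 1) * (a ⬝ᵥ x t) - d * x t i) * hbb
  rw [hstep]
  congr 1
  cases k with
  | zero =>
    have hrest : (thetaStrat n c i a b d).state x 0 (0 : Fin 1) = 0 := rfl
    simp [hrest]
  | succ k =>
    rw [if_neg k.succ_ne_zero, hx k k.lt_succ_self, hstep, thetaStrat_state_succ, pow_succ]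
    linear_combination (d * thetaGain c i (a i) b * (a ⬝ᵥ x k) - d ^ 2 * x k i) * hbb

end Theta

section ClosedLoop

variable {n : ℕ}

lemma mulVec_apply_of_isDiag {ι R : Type*} [Fintype ι] [NonUnitalNonAssocSemiring R]
    {M : Matrix ι ι R} (hM : M.IsDiag) (y : ι → R) (i : ι) : (M *ᵥ y) i = M i i * y i := by
  classical
  rw [← hM.diagonal_diag, mulVec_diagonal, diagonal_apply_eq]

lemma pow_mulVec_apply_of_isDiag {ι R : Type*} [Fintype ι] [DecidableEq ι] [Semiring R]
    {M : Matrix ι ι R} (hM : M.IsDiag) (y : ι → R) (k : ℕ) (i : ι) :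
    (M ^ k *ᵥ y) i = M i i ^ k * y i := by
  rw [← hM.diagonal_diag, diagonal_pow, mulVec_diagonal, Pi.pow_apply, diagonal_apply_eq]

lemma clState_assemble_snd (γ : Fin n → SubCtrl n) (A B D : Matrix (Fin n) (Fin n) ℝ)
    (x0 w0 : Fin n → ℝ) (k : ℕ) (i : Fin n) (s : (γ i).σ) :
    (clState (assemble γ) A B D x0 w0 k).2 ⟨i, s⟩
      = (γ i).state (fun t => (clState (assemble γ) A B D x0 w0 t).1) k s := by
  let _ : ∀ i, Fintype (γ i).σ := fun i => (γ i).fin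
  induction k generalizing i s with
  | zero => rfl
  | succ k ih =>
    rw [clState, SubCtrl.state]
    refine congrArg (fun s : ℝ => s + _) ?_
    change ∑ q : (Σ i, (γ i).σ), blockDiagonal' (fun i => (γ i).AK) ⟨i, s⟩ q * _ = _
    rw [Fintype.sum_sigma, Fintype.sum_eq_single i fun j hj => Finset.sum_eq_zero fun t _ => by
      rw [blockDiagonal'_apply_ne _ _ _ hj.symm, zero_mul]]
    simp only [blockDiagonal'_apply_eq, ih]
    rfl

lemma ctrlU_assemble_apply (γ : Fin n → SubCtrl n) (A B D : Matrix (Fin n) (Fin n) ℝ)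
    (x0 w0 : Fin n → ℝ) (k : ℕ) (i : Fin n) :
    ctrlU (assemble γ) A B D x0 w0 k i
      = (γ i).output (fun t => (clState (assemble γ) A B D x0 w0 t).1) k := by
  let _ : ∀ i, Fintype (γ i).σ := fun i => (γ i).fin
  rw [ctrlU, SubCtrl.output]
  refine congrArg (fun s : ℝ => s + _) ?_
  change ∑ q : (Σ i, (γ i).σ), (if q.1 = i then (γ q.1).CK q.2 else 0) * _ = _
  rw [Fintype.sum_sigma, Fintype.sum_eq_single i fun j hj => by simp [hj]]
  simp only [if_true, clState_assemble_snd]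
  rfl

lemma xTraj_ctrlU (K : Ctrl n) (A B D : Matrix (Fin n) (Fin n) ℝ) (x0 w0 : Fin n → ℝ) (k : ℕ) :
    xTraj A B D x0 w0 (ctrlU K A B D x0 w0) k = (clState K A B D x0 w0 k).1 := by
  induction k with
  | zero => rfl
  | succ k ih => rw [xTraj, ih, clState]; rfl

/-- `x` and `v = u + w` are a state trajectory and a total input of a plant whose input matrix `B`
is diagonal; only the diagonal of `B` enters. -/
def IsTrajectory (A B : Matrix (Fin n) (Fin n) ℝ) (x v : ℕ → Fin n → ℝ) : Prop :=
  ∀ k i, x (k + 1) i = A i ⬝ᵥ x k + B i i * v k i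

/-- `x` and `v = u + w` are the state and the total input of the closed loop formed by the plant
`(A, B, D, x0, w0)`, with `B` and `D` diagonal, and the controller `Γ` designs for it. -/
structure IsClosedLoop (Γ : Strat n) (A B D : Matrix (Fin n) (Fin n) ℝ) (x0 w0 : Fin n → ℝ)
    (x v : ℕ → Fin n → ℝ) : Prop where
  init : x 0 = x0
  step : IsTrajectory A B x v
  input : ∀ k i, v k i = (Γ i (A i) (B i i) (D i i)).output x k + D i i ^ k * w0 i

lemma exists_isClosedLoop {B D : Matrix (Fin n) (Fin n) ℝ} (hB : B.IsDiag) (hD : D.IsDiag)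
    (Γ : Strat n) (A : Matrix (Fin n) (Fin n) ℝ) (x0 w0 : Fin n → ℝ) :
    ∃ x v, IsClosedLoop Γ A B D x0 w0 x v ∧
      Jcost (applyStrat Γ A B D) A B D x0 w0 = ∑ i, nodeCost (x · i) (v · i) := by
  refine ⟨fun k => (clState (applyStrat Γ A B D) A B D x0 w0 k).1,
    fun k i => ctrlU (applyStrat Γ A B D) A B D x0 w0 k i + D i i ^ k * w0 i,
    ⟨rfl, fun k i => ?_, fun k i => ?_⟩, ?_⟩
  · rw [← pow_mulVec_apply_of_isDiag hD, ← Pi.add_apply, ← mulVec_apply_of_isDiag hB, clState]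
    rfl
  · rw [applyStrat, ctrlU_assemble_apply]
  · simp only [nodeCost]
    rw [Jcost, cost, ← Summable.tsum_finsetSum fun _ _ => ENNReal.summable]
    refine tsum_congr fun k => ?_
    rw [xTraj_ctrlU, ← Finset.sum_add_distrib,
      ENNReal.ofReal_sum_of_nonneg fun i _ => by positivity]
    simp only [pow_mulVec_apply_of_isDiag hD]

end ClosedLoop

section Trajectory

variable {n : ℕ} {A B : Matrix (Fin n) (Fin n) ℝ} {c : ℕ} {x v : ℕ → Fin n → ℝ} {i : Fin n}

/-- Cost-to-go `y_i² + q_i (A y)_i²` of node `i` under `Γ^Θ` from the state `y`, once every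
non-sink node has been brought to rest. -/
noncomputable def nodeValue (A B : Matrix (Fin n) (Fin n) ℝ) (c : ℕ) (y : Fin n → ℝ)
    (i : Fin n) : ℝ :=
  y i ^ 2 + thetaWeight c i (A i i) (B i i) * (A i ⬝ᵥ y) ^ 2

lemma nodeValue_nonneg (y : Fin n → ℝ) (i : Fin n) : 0 ≤ nodeValue A B c y i :=
  add_nonneg (sq_nonneg _) (mul_nonneg (thetaWeight_nonneg c i _ _) (sq_nonneg _))

lemma nodeValue_le (y : Fin n → ℝ) (i : Fin n) :
    nodeValue A B c y i ≤ y i ^ 2 + (A i ⬝ᵥ y) ^ 2 / B i i ^ 2 := by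
  rw [nodeValue, div_eq_mul_one_div, mul_comm _ (1 / B i i ^ 2)]
  gcongr
  exact thetaWeight_le c i _ _

lemma IsTrajectory.succ (hx : IsTrajectory A B x v) :
    IsTrajectory A B (fun k => x (k + 1)) fun k => v (k + 1) :=
  fun k => hx (k + 1)

lemma row_dotProduct_eq (hcol : ∀ i j : Fin n, i ≠ j → n - c ≤ (j : ℕ) → A i j = 0)
    {y : Fin n → ℝ} (hy : ∀ j : Fin n, (j : ℕ) < n - c → y j = 0) (i : Fin n) :
    A i ⬝ᵥ y = A i i * y i := by
  refine Fintype.sum_eq_single i fun j hj => ?_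
  rcases lt_or_ge (j : ℕ) (n - c) with hjc | hjc
  · rw [hy j hjc, mul_zero]
  · rw [hcol i j hj.symm hjc, zero_mul]

section

variable (hcol : ∀ i j : Fin n, i ≠ j → n - c ≤ (j : ℕ) → A i j = 0) (hx : IsTrajectory A B x v)
  (hrest : ∀ j : Fin n, (j : ℕ) < n - c → ∀ k, x (k + 1) j = 0) (hb : B i i ≠ 0)
include hcol hx hrest hb

lemma nodeCost_le_nodeValue
    (hfeedback : ∀ k, x (k + 1) i = thetaGain c i (A i i) (B i i) * (A i ⬝ᵥ x k)) :
    nodeCost (x · i) (v · i) ≤ ENNReal.ofReal (nodeValue A B c (x 0) i) :=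
  nodeCost_le_of_riccati_le (z := fun k => A i ⬝ᵥ x k) hb (thetaWeight_nonneg c i _ _)
    (thetaGain_nonneg c i _ _) (thetaGain_add_sq_mul_thetaWeight hb) (thetaWeight_riccati_le hb)
    (fun k => hx k i) (fun k => row_dotProduct_eq hcol (hrest · · k) i) hfeedback

lemma nodeValue_add_le_nodeCost (hi : n - c ≤ (i : ℕ)) :
    ENNReal.ofReal (nodeValue A B c (x 0) i
      + (v 0 i + B i i * thetaWeight c i (A i i) (B i i) * (A i ⬝ᵥ x 0)) ^ 2)
      ≤ nodeCost (x · i) (v · i) := by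
  have hric := thetaWeight_riccati (a := A i i) hi hb
  have hsum := thetaGain_add_sq_mul_thetaWeight (c := c) (i := i) (a := A i i) hb
  have hq := thetaWeight_nonneg c i (A i i) (B i i)
  refine le_trans (ENNReal.ofReal_le_ofReal ?_)
    (le_nodeCost_of_riccati (z := fun k => A i ⬝ᵥ x k) hq hsum hric (fun k => hx k i)
      fun k => row_dotProduct_eq hcol (hrest · · k) i)
  have hsq := sq_add_weighted_sq_eq hsum hric (A i ⬝ᵥ x 0) (v 0 i)
  rw [← hx 0 i, zero_add] at hsq
  have : 0 ≤ B i i ^ 2 * (1 + A i i ^ 2 * thetaWeight c i (A i i) (B i i))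
      * (v 0 i + B i i * thetaWeight c i (A i i) (B i i) * (A i ⬝ᵥ x 0)) ^ 2 := by
    positivity
  rw [nodeValue]
  linarith

-- A non-sink node is at rest after one step, so its input at time `0` is forced.
lemma nodeValue_le_nodeCost :
    ENNReal.ofReal (nodeValue A B c (x 0) i) ≤ nodeCost (x · i) (v · i) := by
  rcases lt_or_ge (i : ℕ) (n - c) with hi | hi
  · refine le_trans (le_of_eq (congrArg ENNReal.ofReal ?_)) (ENNReal.le_tsum 0)
    have hv : A i ⬝ᵥ x 0 = -(B i i * v 0 i) := by linarith [hx 0 i, hrest i hi 0]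
    rw [nodeValue, thetaWeight, thetaGain_of_lt hi, hv]
    field_simp
    ring
  · refine le_trans (ENNReal.ofReal_le_ofReal ?_)
      (nodeValue_add_le_nodeCost hcol hx hrest hb hi)
    exact le_add_of_nonneg_right (sq_nonneg _)

lemma eq_thetaGain_mul_of_nodeCost_le
    (hcost : nodeCost (x · i) (v · i) ≤ ENNReal.ofReal (nodeValue A B c (x 0) i)) :
    x 1 i = thetaGain c i (A i i) (B i i) * (A i ⬝ᵥ x 0) := by
  rcases lt_or_ge (i : ℕ) (n - c) with hi | hi
  · rw [hrest i hi 0, thetaGain_of_lt hi, zero_mul]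
  · have hle := (nodeValue_add_le_nodeCost hcol hx hrest hb hi).trans hcost
    rw [ENNReal.ofReal_le_ofReal_iff (nodeValue_nonneg _ _), add_le_iff_nonpos_right] at hle
    have hv := pow_eq_zero_iff two_ne_zero |>.1 (le_antisymm hle (sq_nonneg _))
    linear_combination hx 0 i + B i i * hv
      - (A i ⬝ᵥ x 0) * thetaGain_add_sq_mul_thetaWeight (c := c) (i := i) (a := A i i) hb

end

end Trajectory

section ClosedLoopTheta

variable {n : ℕ} {A B D : Matrix (Fin n) (Fin n) ℝ} {c : ℕ} {Γ : Strat n} {x0 w0 : Fin n → ℝ}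
  {x v : ℕ → Fin n → ℝ} {i : Fin n}

/-- The initial disturbance `B⁻¹ D x0`, for which the first step of `Γ^Θ` leaves no
disturbance-dependent remainder in the state. -/
noncomputable def matchedDisturbance (B D : Matrix (Fin n) (Fin n) ℝ) (x0 : Fin n → ℝ) :
    Fin n → ℝ :=
  fun i => D i i * x0 i / B i i

lemma mul_matchedDisturbance (hb : B i i ≠ 0) :
    B i i * matchedDisturbance B D x0 i = D i i * x0 i :=
  mul_div_cancel₀ _ hb

namespace IsClosedLoop

lemma step_eq (h : IsClosedLoop Γ A B D x0 w0 x v) (hb : B i i ≠ 0) {k : ℕ}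
    (hout : ∀ t < k, (Γ i (A i) (B i i) (D i i)).output x t
      = (thetaStrat n c i (A i) (B i i) (D i i)).output x t) :
    x (k + 1) i = thetaGain c i (A i i) (B i i) * (A i ⬝ᵥ x k)
      + (if k = 0 then B i i * w0 i - D i i * x0 i else 0)
      + B i i * ((Γ i (A i) (B i i) (D i i)).output x k
        - (thetaStrat n c i (A i) (B i i) (D i i)).output x k) := by
  have htheta := thetaStrat_closed_loop (c := c) (w := w0 i) hb (x := x) (k := k)
    fun t ht => by rw [h.step, h.input, hout t ht]
  rw [h.step, h.input, ← h.init, ← htheta]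
  ring

lemma step_eq_of_output_eq (h : IsClosedLoop Γ A B D x0 w0 x v) (hb : B i i ≠ 0) {k : ℕ}
    (hout : ∀ t ≤ k, (Γ i (A i) (B i i) (D i i)).output x t
      = (thetaStrat n c i (A i) (B i i) (D i i)).output x t) :
    x (k + 1) i = thetaGain c i (A i i) (B i i) * (A i ⬝ᵥ x k)
      + if k = 0 then B i i * w0 i - D i i * x0 i else 0 := by
  rw [h.step_eq hb fun t ht => hout t ht.le, hout k le_rfl, sub_self, mul_zero, add_zero]

lemma step_eq_of_matched (h : IsClosedLoop Γ A B D x0 (matchedDisturbance B D x0) x v)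
    (hb : B i i ≠ 0) {k : ℕ}
    (hout : ∀ t < k, (Γ i (A i) (B i i) (D i i)).output x t
      = (thetaStrat n c i (A i) (B i i) (D i i)).output x t) :
    x (k + 1) i = thetaGain c i (A i i) (B i i) * (A i ⬝ᵥ x k)
      + B i i * ((Γ i (A i) (B i i) (D i i)).output x k
        - (thetaStrat n c i (A i) (B i i) (D i i)).output x k) := by
  rw [h.step_eq hb hout, mul_matchedDisturbance hb, sub_self, ite_self, add_zero]

end IsClosedLoop

lemma Jcost_thetaStrat_le_of_matched (hB : B.IsDiag) (hD : D.IsDiag) (hb : ∀ i, B i i ≠ 0)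
    (hcol : ∀ i j : Fin n, i ≠ j → n - c ≤ (j : ℕ) → A i j = 0) (x0 : Fin n → ℝ) :
    Jcost (applyStrat (thetaStrat n c) A B D) A B D x0 (matchedDisturbance B D x0)
      ≤ ∑ i, ENNReal.ofReal (nodeValue A B c x0 i) := by
  obtain ⟨x, v, h, hJ⟩ := exists_isClosedLoop hB hD (thetaStrat n c) A x0
    (matchedDisturbance B D x0)
  have hfeedback : ∀ i k, x (k + 1) i = thetaGain c i (A i i) (B i i) * (A i ⬝ᵥ x k) :=
    fun i k => by
      rw [h.step_eq_of_matched (c := c) (hb i) fun _ _ => rfl, sub_self, mul_zero, add_zero]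
  rw [hJ, ← h.init]
  refine Finset.sum_le_sum fun i _ =>
    nodeCost_le_nodeValue hcol h.step (fun j hj k => ?_) (hb i) (hfeedback i)
  rw [hfeedback, thetaGain_of_lt hj, zero_mul]

end ClosedLoopTheta

section Probe

variable {n : ℕ}

/-- Dynamics with row `i` equal to `a`, a single link of strength `r` from node `i` to node `l`,
and every other row zero. -/
def probeDynamics (i l : Fin n) (a : Fin n → ℝ) (r : ℝ) : Matrix (Fin n) (Fin n) ℝ :=
  Function.update (Pi.single l (Pi.single i r)) i a

/-- Diagonal input matrix with gain `b` at node `i`, `β` at node `l` and `ε` elsewhere. -/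
def probeInput (i l : Fin n) (b β ε : ℝ) : Matrix (Fin n) (Fin n) ℝ :=
  diagonal (Function.update (Function.update (fun _ => ε) l β) i b)

variable {i l : Fin n} {a : Fin n → ℝ} {r b d β ε : ℝ}

lemma probeDynamics_self : probeDynamics i l a r i = a :=
  Function.update_self ..

lemma probeDynamics_link (hli : l ≠ i) : probeDynamics i l a r l = Pi.single i r := by
  rw [probeDynamics, Function.update_of_ne hli, Pi.single_eq_same]

lemma probeDynamics_other {m : Fin n} (hmi : m ≠ i) (hml : m ≠ l) :
    probeDynamics i l a r m = 0 := by
  rw [probeDynamics, Function.update_of_ne hmi, Pi.single_eq_of_ne hml]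

lemma probeInput_self : probeInput i l b β ε i i = b := by
  rw [probeInput, diagonal_apply_eq, Function.update_self]

lemma probeInput_link (hli : l ≠ i) : probeInput i l b β ε l l = β := by
  rw [probeInput, diagonal_apply_eq, Function.update_of_ne hli, Function.update_self]

lemma probeInput_other {m : Fin n} (hmi : m ≠ i) (hml : m ≠ l) :
    probeInput i l b β ε m m = ε := by
  rw [probeInput, diagonal_apply_eq, Function.update_of_ne hmi, Function.update_of_ne hml]

lemma adm_probe {SP : Fin n → Fin n → Bool} (hli : l ≠ i) (hlink : SP l i = true)
    (ha : ∀ j, SP i j = false → a j = 0) (hb : ε ≤ |b|) (hβ : ε ≤ β) :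
    Adm SP ε (probeDynamics i l a r) (probeInput i l b β ε) (diagonal (Pi.single i d)) := by
  refine ⟨fun m j hmj => ?_, isDiag_diagonal _, fun m => ?_, isDiag_diagonal _⟩
  · rcases eq_or_ne m i with rfl | hmi
    · rw [probeDynamics_self]; exact ha j hmj
    rcases eq_or_ne m l with rfl | hml
    · rw [probeDynamics_link hli, Pi.single_eq_of_ne]
      rintro rfl
      simp [hlink] at hmj
    · rw [probeDynamics_other hmi hml]; rfl
  · rcases eq_or_ne m i with rfl | hmi
    · rwa [probeInput_self]
    rcases eq_or_ne m l with rfl | hml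
    · rw [probeInput_link hli]; exact hβ.trans (le_abs_self β)
    · rw [probeInput_other hmi hml]; exact le_abs_self ε

lemma sum_nodeValue_probe_le {c : ℕ} (hli : l ≠ i) (y : Fin n → ℝ) :
    ∑ m, nodeValue (probeDynamics i l a r) (probeInput i l b β ε) c y m
      ≤ ∑ m, y m ^ 2 + (a ⬝ᵥ y) ^ 2 / b ^ 2 + r ^ 2 * (y i ^ 2 / β ^ 2) := by
  refine (Finset.sum_le_sum fun m _ => nodeValue_le y m).trans (le_of_eq ?_)
  have hlinks : ∑ m, (probeDynamics i l a r m ⬝ᵥ y) ^ 2 / probeInput i l b β ε m m ^ 2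
      = (a ⬝ᵥ y) ^ 2 / b ^ 2 + r ^ 2 * (y i ^ 2 / β ^ 2) := by
    rw [Fintype.sum_eq_add i l hli.symm fun m hm => by
        rw [probeDynamics_other hm.1 hm.2, zero_dotProduct]; simp,
      probeDynamics_self, probeDynamics_link hli, probeInput_self, probeInput_link hli,
      single_dotProduct, mul_pow, mul_div_assoc]
  rw [Finset.sum_add_distrib, add_assoc, hlinks]

end Probe

section Undominated

open Filter

variable {n c : ℕ} {εb : ℝ} {SP : Fin n → Fin n → Bool} {Γ : Strat n}

lemma Adm.diag_ne_zero {A B D : Matrix (Fin n) (Fin n) ℝ} (h : Adm SP εb A B D) (hεb : 0 < εb)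
    (i : Fin n) : B i i ≠ 0 :=
  abs_pos.1 (hεb.trans_le (h.2.2.1 i))

lemma eq_zero_of_forall_link_penalty_le {s δ ε C : ℝ} (hε : 0 < ε)
    (h : ∀ r β : ℝ, ε ≤ β →
      r ^ 2 * ((s ^ 2 + δ ^ 2) / (1 + β ^ 2)) ≤ C + r ^ 2 * (s ^ 2 / β ^ 2)) : δ = 0 := by
  have hδ : δ ^ 2 ≤ 0 := by
    refine le_of_eventually_sq_mul_le (C := s ^ 2) ?_
    filter_upwards [eventually_ge_atTop ε] with β hβ
    have hβ0 : 0 < β := hε.trans_le hβ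
    have hr := le_of_eventually_sq_mul_le (Eventually.of_forall fun r => h r β hβ)
    rw [div_le_div_iff₀ (by positivity) (by positivity)] at hr
    linarith
  exact pow_eq_zero_iff two_ne_zero |>.1 (le_antisymm hδ (sq_nonneg δ))

lemma IsTrajectory.link_le_nodeCost {A B : Matrix (Fin n) (Fin n) ℝ} {x v : ℕ → Fin n → ℝ}
    {i l : Fin n} {r : ℝ} (hx : IsTrajectory A B x v) (hl : A l = Pi.single i r) {s t : ℕ}
    (hst : s ≠ t) :
    ENNReal.ofReal (r ^ 2 * ((x s i ^ 2 + x t i ^ 2) / (1 + B l l ^ 2)))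
      ≤ nodeCost (x · l) (v · l) := by
  refine le_trans (le_of_eq ?_) ((ENNReal.sum_le_tsum {s, t}).trans
    (tsum_sq_div_le_nodeCost (z := fun k => r * x k i) fun k => by
      rw [hx, hl, single_dotProduct]))
  rw [Finset.sum_pair hst, ← ENNReal.ofReal_add (by positivity) (by positivity)]
  congr 1
  ring

section Dominating

variable (hεb : 0 < εb)
  (hsinks : ∀ i : Fin n, (∀ l : Fin n, l ≠ i → SP l i = false) ↔ n - c ≤ (i : ℕ))
  (hdom : ∀ (A B D : Matrix (Fin n) (Fin n) ℝ) (x0 w0 : Fin n → ℝ), Adm SP εb A B D →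
    Jcost (applyStrat Γ A B D) A B D x0 w0
      ≤ Jcost (applyStrat (thetaStrat n c) A B D) A B D x0 w0)

include hsinks in
lemma Adm.col_eq_zero {A B D : Matrix (Fin n) (Fin n) ℝ} (h : Adm SP εb A B D) (i j : Fin n)
    (hij : i ≠ j) (hj : n - c ≤ (j : ℕ)) : A i j = 0 :=
  h.1 i j ((hsinks j).2 hj i hij)

include hεb hsinks hdom

lemma Jcost_le_sum_nodeValue_of_matched {A B D : Matrix (Fin n) (Fin n) ℝ}
    (h : Adm SP εb A B D) (x0 : Fin n → ℝ) :
    Jcost (applyStrat Γ A B D) A B D x0 (matchedDisturbance B D x0)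
      ≤ ∑ i, ENNReal.ofReal (nodeValue A B c x0 i) :=
  (hdom A B D _ _ h).trans <|
    Jcost_thetaStrat_le_of_matched h.2.1 h.2.2.2 (h.diag_ne_zero hεb) (h.col_eq_zero hsinks) x0

-- The plant has links only into `i` and from `i` to `l`. Where `Γ` first departs from `Γ^Θ`, it
-- leaves node `i` off the origin by `b (u^Γ - u^Θ)`, and node `l` then pays for that.
lemma link_penalty_le {i l : Fin n} {a : Fin n → ℝ} {b d r β : ℝ} {k : ℕ} (hi : (i : ℕ) < n - c)
    (hli : l ≠ i) (hlink : SP l i = true) (ha : ∀ j, SP i j = false → a j = 0)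
    (hb : εb ≤ |b|) (hβ : εb ≤ β)
    (hprev : ∀ t < k, ∀ x, (Γ i a b d).output x t = (thetaStrat n c i a b d).output x t)
    (y : ℕ → Fin n → ℝ) :
    r ^ 2 * ((y 0 i ^ 2
      + (b * ((Γ i a b d).output y k - (thetaStrat n c i a b d).output y k)) ^ 2)
        / (1 + β ^ 2))
      ≤ ∑ m, y 0 m ^ 2 + (a ⬝ᵥ y 0) ^ 2 / b ^ 2 + r ^ 2 * (y 0 i ^ 2 / β ^ 2) := by
  have hadm := adm_probe (r := r) (d := d) hli hlink ha hb hβ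
  have hbi := hadm.diag_ne_zero hεb i
  obtain ⟨x, v, h, hJ⟩ := exists_isClosedLoop hadm.2.1 hadm.2.2.2 Γ (probeDynamics i l a r)
    (y 0) (matchedDisturbance (probeInput i l b β εb) (diagonal (Pi.single i d)) (y 0))
  have hdev : x (k + 1) i
      = b * ((Γ i a b d).output y k - (thetaStrat n c i a b d).output y k) := by
    have hstep := h.step_eq_of_matched (c := c) (k := k) hbi
    simp only [thetaGain_of_lt hi, probeDynamics_self, probeInput_self, diagonal_apply_eq,
      Pi.single_eq_same, zero_mul, zero_add] at hstep
    rw [hstep fun t ht => hprev t ht x, SubCtrl.output_sub_output_eq hprev h.init]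
  rw [← ENNReal.ofReal_le_ofReal_iff (by positivity), ← hdev, ← h.init]
  calc ENNReal.ofReal (r ^ 2 * ((x 0 i ^ 2 + x (k + 1) i ^ 2) / (1 + β ^ 2)))
      ≤ nodeCost (x · l) (v · l) := by
        rw [← probeInput_link (i := i) (b := b) (β := β) (ε := εb) hli]
        exact h.step.link_le_nodeCost (probeDynamics_link hli) k.succ_ne_zero.symm
    _ ≤ ∑ m, nodeCost (x · m) (v · m) :=
        Finset.single_le_sum (f := fun m => nodeCost (x · m) (v · m)) (fun _ _ => zero_le)
          (Finset.mem_univ l)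
    _ ≤ ∑ m, ENNReal.ofReal
          (nodeValue (probeDynamics i l a r) (probeInput i l b β εb) c (x 0) m) := by
        rw [← hJ, h.init]
        exact Jcost_le_sum_nodeValue_of_matched hεb hsinks hdom hadm (y 0)
    _ ≤ _ := by
        rw [← ENNReal.ofReal_sum_of_nonneg fun m _ => nodeValue_nonneg _ m]
        exact ENNReal.ofReal_le_ofReal (sum_nodeValue_probe_le hli _)

lemma nonsink_output_eq {i : Fin n} {a : Fin n → ℝ} {b d : ℝ} (hi : (i : ℕ) < n - c)
    (ha : ∀ j, SP i j = false → a j = 0) (hb : εb ≤ |b|) (k : ℕ) :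
    ∀ y, (Γ i a b d).output y k = (thetaStrat n c i a b d).output y k := by
  obtain ⟨l, hli, hlink⟩ : ∃ l, l ≠ i ∧ SP l i = true := by
    have hnotsink := mt (hsinks i).1 hi.not_ge
    push Not at hnotsink
    simpa using hnotsink
  induction k using Nat.strong_induction_on with
  | _ k hprev =>
    intro y
    have hdev := eq_zero_of_forall_link_penalty_le hεb fun r β hβ =>
      link_penalty_le hεb hsinks hdom (r := r) (d := d) hi hli hlink ha hb hβ hprev y
    exact sub_eq_zero.1 ((mul_eq_zero.1 hdev).resolve_left (abs_pos.1 (hεb.trans_le hb)))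

lemma nonsink_step_eq {A B D : Matrix (Fin n) (Fin n) ℝ} (h : Adm SP εb A B D)
    {x0 w0 : Fin n → ℝ} {x v : ℕ → Fin n → ℝ} (hx : IsClosedLoop Γ A B D x0 w0 x v) {j : Fin n}
    (hj : (j : ℕ) < n - c) (k : ℕ) :
    x (k + 1) j = if k = 0 then B j j * w0 j - D j j * x0 j else 0 := by
  rw [hx.step_eq_of_output_eq (c := c) (h.diag_ne_zero hεb j) fun t _ =>
    nonsink_output_eq hεb hsinks hdom hj (h.1 j) (h.2.2.1 j) t x, thetaGain_of_lt hj, zero_mul,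
    zero_add]

lemma initial_output_eq {A B D : Matrix (Fin n) (Fin n) ℝ} (h : Adm SP εb A B D) (i : Fin n)
    (y : ℕ → Fin n → ℝ) :
    (Γ i (A i) (B i i) (D i i)).output y 0
      = (thetaStrat n c i (A i) (B i i) (D i i)).output y 0 := by
  have hb := h.diag_ne_zero hεb
  obtain ⟨x, v, hx, hJ⟩ :=
    exists_isClosedLoop h.2.1 h.2.2.2 Γ A (y 0) (matchedDisturbance B D (y 0))
  have hrest : ∀ j : Fin n, (j : ℕ) < n - c → ∀ k, x (k + 1) j = 0 := fun j hj k => by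
    rw [nonsink_step_eq hεb hsinks hdom h hx hj, mul_matchedDisturbance (hb j), sub_self, ite_self]
  have hcol := h.col_eq_zero hsinks
  have hcost : nodeCost (x · i) (v · i) ≤ ENNReal.ofReal (nodeValue A B c (x 0) i) := by
    refine le_of_sum_le_sum_of_forall_le (f := fun j => nodeCost (x · j) (v · j))
      (fun j => nodeValue_le_nodeCost hcol hx.step hrest (hb j))
      (fun j => ENNReal.ofReal_ne_top) ?_ i
    rw [← hJ, hx.init]
    exact Jcost_le_sum_nodeValue_of_matched hεb hsinks hdom h (y 0)
  have hopt := eq_thetaGain_mul_of_nodeCost_le hcol hx.step hrest (hb i) hcost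
  have hstep := hx.step_eq_of_matched (c := c) (hb i) (k := 0) (by simp)
  rw [zero_add, hopt, left_eq_add, mul_eq_zero_iff_left (hb i), sub_eq_zero] at hstep
  simpa only [SubCtrl.output_zero, hx.init] using hstep

end Dominating

theorem theta_undominated_general (n : ℕ) (εb : ℝ) (hεb : 0 < εb) (c : ℕ)
    (SP : Fin n → Fin n → Bool)
    (hsinks : ∀ i : Fin n, (∀ l : Fin n, l ≠ i → SP l i = false) ↔ n - c ≤ (i : ℕ))
    (Γ : Strat n)
    (hdom : ∀ (A B D : Matrix (Fin n) (Fin n) ℝ) (x0 w0 : Fin n → ℝ), Adm SP εb A B D →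
      Jcost (applyStrat Γ A B D) A B D x0 w0
        ≤ Jcost (applyStrat (thetaStrat n c) A B D) A B D x0 w0)
    (A B D : Matrix (Fin n) (Fin n) ℝ) (x0 w0 : Fin n → ℝ) (hadm : Adm SP εb A B D) :
    Jcost (applyStrat Γ A B D) A B D x0 w0
      = Jcost (applyStrat (thetaStrat n c) A B D) A B D x0 w0 := by
  refine le_antisymm (hdom A B D x0 w0 hadm) ?_
  obtain ⟨x, v, hx, hJ⟩ := exists_isClosedLoop hadm.2.1 hadm.2.2.2 Γ A x0 w0
  obtain ⟨x', v', hx', hJ'⟩ := exists_isClosedLoop hadm.2.1 hadm.2.2.2 (thetaStrat n c) A x0 w0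
  have hb := hadm.diag_ne_zero hεb
  have hcol := hadm.col_eq_zero hsinks
  have hx0 : x' 0 = x 0 := hx'.init.trans hx.init.symm
  have hv0 : v' 0 = v 0 := funext fun i => by
    rw [hx'.input, hx.input, initial_output_eq hεb hsinks hdom hadm]
    simp only [SubCtrl.output_zero, hx0]
  have hx1 : x' 1 = x 1 := funext fun i => by rw [hx'.step, hx.step, hx0, hv0]
  have hfeedback : ∀ i k,
      x' (k + 2) i = thetaGain c i (A i i) (B i i) * (A i ⬝ᵥ x' (k + 1)) := fun i k => by
    rw [hx'.step_eq_of_output_eq (c := c) (hb i) fun _ _ => rfl, if_neg k.succ_ne_zero, add_zero]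
  have hrest' : ∀ j : Fin n, (j : ℕ) < n - c → ∀ k, x' (k + 2) j = 0 := fun j hj k => by
    rw [hfeedback, thetaGain_of_lt hj, zero_mul]
  have hrest : ∀ j : Fin n, (j : ℕ) < n - c → ∀ k, x (k + 2) j = 0 := fun j hj k => by
    rw [nonsink_step_eq hεb hsinks hdom hadm hx hj, if_neg k.succ_ne_zero]
  rw [hJ, hJ']
  refine Finset.sum_le_sum fun i _ => ?_
  rw [nodeCost_eq_add_tail, nodeCost_eq_add_tail (x · i), hx0, hv0]
  gcongr
  calc nodeCost (fun k => x' (k + 1) i) (fun k => v' (k + 1) i)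
      ≤ ENNReal.ofReal (nodeValue A B c (x' 1) i) :=
        nodeCost_le_nodeValue hcol hx'.step.succ hrest' (hb i) (hfeedback i)
    _ = ENNReal.ofReal (nodeValue A B c (x 1) i) := by rw [hx1]
    _ ≤ nodeCost (fun k => x (k + 1) i) fun k => v (k + 1) i :=
        nodeValue_le_nodeCost hcol hx.step.succ hrest (hb i)

end Undominated

/-- **Theorem 2(b) (tho:6(b)).** Let the plant graph contain no isolated node, let its sinks
be exactly the last `c ≥ 1` nodes, and let `S_K ⊇ S_P` (with self-loops). Then `Γ^Θ` is
undominated in the set `𝒞` of limited model information strategies with totally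
disconnected design graph. -/
theorem theta_undominated (n : ℕ) (hn : 2 ≤ n) (εb : ℝ) (hεb : 0 < εb)
    (c : ℕ) (hc : 1 ≤ c) (hcn : c ≤ n)
    (SP SK : Fin n → Fin n → Bool)
    (hnoiso : ∀ i : Fin n, ∃ j : Fin n, j ≠ i ∧ (SP i j = true ∨ SP j i = true))
    (hsinks : ∀ i : Fin n, (∀ l : Fin n, l ≠ i → SP l i = false) ↔ n - c ≤ (i : ℕ))
    (hsup : ∀ i j, SP i j = true → SK i j = true)
    (hself : ∀ i, SK i i = true) :
    ¬ ∃ Γ : Strat n,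
      (∀ A B D : Matrix (Fin n) (Fin n) ℝ, Adm SP εb A B D →
        memK SK (applyStrat Γ A B D)) ∧
      (∀ (A B D : Matrix (Fin n) (Fin n) ℝ) (x0 w0 : Fin n → ℝ), Adm SP εb A B D →
        Jcost (applyStrat Γ A B D) A B D x0 w0
          ≤ Jcost (applyStrat (thetaStrat n c) A B D) A B D x0 w0) ∧
      (∃ (A B D : Matrix (Fin n) (Fin n) ℝ) (x0 w0 : Fin n → ℝ), Adm SP εb A B D ∧
        Jcost (applyStrat Γ A B D) A B D x0 w0
          < Jcost (applyStrat (thetaStrat n c) A B D) A B D x0 w0) := by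
  rintro ⟨Γ, -, hdom, A, B, D, x0, w0, hadm, hlt⟩
  exact hlt.ne (theta_undominated_general n εb hεb c SP hsinks Γ hdom A B D x0 w0 hadm)
end
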